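/- Let G be a graph on n vertices with maximum degree Δ and minimum degree δ, let G̅ be the complement of G, and let 0 ≤ α ≤ 1. Then for every k with 1 ≤ k ≤ n, (1−α)n + (αn−1)k ≤ S_k(A_α(G)) + S_k(A_α(G̅)) ≤ k·[ (2−α)n + α(Δ−δ−1) − (1−α)(k+1) ]. -/

import Mathlib

open Matrix Finset Real

/-- The `A_α`-matrix of a graph: `A_α(G) = α·D(G) + (1−α)·A(G)`. -/
noncomputable def Aalpha {n : ℕ} (α : ℝ) (G : SimpleGraph (Fin n)) [DecidableRel G.Adj] :
    Matrix (Fin n) (Fin n) ℝ :=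
  α • Matrix.diagonal (fun i => (G.degree i : ℝ)) + (1 - α) • G.adjMatrix ℝ

/-- The sum of the `k` largest eigenvalues of a real symmetric matrix, expressed as
the supremum over all `k`-subsets of indices of the corresponding eigenvalue sums. -/
noncomputable def Sk {n : ℕ} (M : Matrix (Fin n) (Fin n) ℝ) (k : ℕ) : ℝ :=
  if h : M.IsHermitian then
    sSup {x : ℝ | ∃ s : Finset (Fin n), s.card = k ∧ x = ∑ i ∈ s, h.eigenvalues i}
  else 0

/-!
By Ky Fan's maximum principle, `S_k(M)` is the maximum of `tr(MP)` over the symmetric matrices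
`0 ≤ P ≤ 1` of trace `k`; in particular `S_k` is subadditive.

Lower bound: `A_α(G) + A_α(Gᶜ) = (αn - 1)I + (1 - α)J` with `J` the all-ones matrix. Mixing the
identity with the projection `J/n` gives an admissible `P` with `tr(JP) = n`, and testing the sum
against it yields exactly `(1 - α)n + (αn - 1)k`.

Upper bound: `S_k(A_α(G)) ≤ α S_k(D) + (1 - α) S_k(A)` and `S_k(D) ≤ kΔ`. Since `A` has trace `0`
and `tr(A²) ≤ n(n - 1)`, applying Cauchy–Schwarz separately to the chosen `k` eigenvalues and to
the others gives `S_k(A)² ≤ k(n - k)(n - 1)`, which AM-GM bounds by `(k(2n - k - 1)/2)²`.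
-/

section ThresholdSums

variable {ι R : Type*} [Fintype ι]

lemma exists_card_eq_and_threshold [LinearOrder R] [Nonempty R] (x : ι → R) {k : ℕ}
    (hk : k ≤ Fintype.card ι) :
    ∃ s : Finset ι, #s = k ∧ ∃ t, (∀ i ∈ s, t ≤ x i) ∧ ∀ i ∉ s, x i ≤ t := by
  classical
  induction k with
  | zero =>
    obtain ⟨t, ht⟩ := (Set.finite_range x).bddAbove
    exact ⟨∅, card_empty, t, by simp, fun i _ ↦ ht ⟨i, rfl⟩⟩
  | succ k ih =>
    obtain ⟨s, hs, t, hmem, hnotMem⟩ := ih (by omega)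
    have hne : sᶜ.Nonempty := by rw [← card_pos, card_compl]; omega
    obtain ⟨j, hj, hmax⟩ := exists_max_image sᶜ x hne
    rw [mem_compl] at hj
    refine ⟨insert j s, by rw [card_insert_of_notMem hj, hs], x j, fun i hi ↦ ?_, fun i hi ↦ ?_⟩
    · obtain rfl | hi := mem_insert.1 hi
      · exact le_rfl
      · exact (hnotMem j hj).trans (hmem i hi)
    · exact hmax i (mem_compl.2 fun h ↦ hi (mem_insert_of_mem h))

variable [CommRing R] [LinearOrder R] [IsStrictOrderedRing R]

lemma sum_mul_le_sum_of_threshold {x p : ι → R} {s : Finset ι} {t : R}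
    (hmem : ∀ i ∈ s, t ≤ x i) (hnotMem : ∀ i ∉ s, x i ≤ t)
    (hp0 : ∀ i, 0 ≤ p i) (hp1 : ∀ i, p i ≤ 1) (hp : ∑ i, p i = #s) :
    ∑ i, x i * p i ≤ ∑ i ∈ s, x i := by
  classical
  have hterm (i : ι) : (x i - t) * p i ≤ if i ∈ s then x i - t else 0 := by
    split_ifs with hi
    · exact mul_le_of_le_one_right (sub_nonneg.2 (hmem i hi)) (hp1 i)
    · exact mul_nonpos_of_nonpos_of_nonneg (sub_nonpos.2 (hnotMem i hi)) (hp0 i)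
  have hsum := sum_le_sum fun i (_ : i ∈ univ) ↦ hterm i
  simp only [sub_mul, sum_sub_distrib, ← mul_sum, hp, sum_ite_mem, univ_inter, sum_const,
    nsmul_eq_mul] at hsum
  linarith

lemma card_mul_sq_sum_le_of_sum_eq_zero [DecidableEq ι] {x : ι → R} (hx : ∑ i, x i = 0)
    (s : Finset ι) :
    Fintype.card ι * (∑ i ∈ s, x i) ^ 2 ≤ #s * #sᶜ * ∑ i, x i ^ 2 := by
  have hs := sq_sum_le_card_mul_sum_sq (s := s) (f := x)
  have hsc := sq_sum_le_card_mul_sum_sq (s := sᶜ) (f := x)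
  rw [← sum_add_sum_compl s, add_eq_zero_iff_neg_eq] at hx
  rw [← hx, neg_sq] at hsc
  rw [← card_add_card_compl s, ← sum_add_sum_compl s, Nat.cast_add]
  linear_combination (#sᶜ : R) * hs + (#s : R) * hsc

end ThresholdSums

section Fantope

open scoped MatrixOrder
open Unitary

variable {ι : Type*} [Fintype ι] [DecidableEq ι]

/-- The fantope: the symmetric matrices `P` with `0 ≤ P ≤ 1` in the Loewner order and trace `r`.
For an integer `0 ≤ r ≤ |ι|` it is the convex hull of the orthogonal projections
of rank `r`, so Ky Fan's principle expresses sums of largest eigenvalues as maxima over it. -/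
def fantope (ι : Type*) [Fintype ι] [DecidableEq ι] (r : ℝ) : Set (Matrix ι ι ℝ) :=
  {P | P ∈ Set.Icc 0 1 ∧ P.trace = r}

lemma mem_fantope_of_isStarProjection {P : Matrix ι ι ℝ} (hP : IsStarProjection P) :
    P ∈ fantope ι P.trace :=
  ⟨⟨hP.nonneg, hP.le_one⟩, rfl⟩

lemma convexComb_mem_fantope {P Q : Matrix ι ι ℝ} {r s c : ℝ} (hP : P ∈ fantope ι r)
    (hQ : Q ∈ fantope ι s) (hc0 : 0 ≤ c) (hc1 : c ≤ 1) :
    c • P + (1 - c) • Q ∈ fantope ι (c * r + (1 - c) * s) :=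
  ⟨convex_Icc 0 1 hP.1 hQ.1 hc0 (sub_nonneg.2 hc1) (by ring),
    by simp only [trace_add, trace_smul, hP.2, hQ.2, smul_eq_mul]⟩

lemma trace_conjStarAlgAut (U : unitary (Matrix ι ι ℝ)) (P : Matrix ι ι ℝ) :
    (conjStarAlgAut ℝ _ U P).trace = P.trace := by
  rw [conjStarAlgAut_apply, trace_mul_cycle, coe_star_mul_self, one_mul]

lemma conjStarAlgAut_mem_fantope {P : Matrix ι ι ℝ} {r : ℝ} (hP : P ∈ fantope ι r)
    (U : unitary (Matrix ι ι ℝ)) : conjStarAlgAut ℝ _ U P ∈ fantope ι r := by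
  refine ⟨⟨map_nonneg _ hP.1.1, ?_⟩, by rw [trace_conjStarAlgAut, hP.2]⟩
  simpa only [map_one] using OrderHomClass.mono (conjStarAlgAut ℝ _ U) hP.1.2

lemma apply_self_nonneg_of_mem_fantope {P : Matrix ι ι ℝ} {r : ℝ} (hP : P ∈ fantope ι r) (i : ι) :
    0 ≤ P i i :=
  (nonneg_iff_posSemidef.1 hP.1.1).diag_nonneg

lemma apply_self_le_one_of_mem_fantope {P : Matrix ι ι ℝ} {r : ℝ} (hP : P ∈ fantope ι r) (i : ι) :
    P i i ≤ 1 := by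
  simpa using (le_iff.1 hP.1.2).diag_nonneg (i := i)

lemma diagonal_indicator_mem_fantope (s : Finset ι) :
    diagonal (fun i ↦ if i ∈ s then (1 : ℝ) else 0) ∈ fantope ι #s := by
  have hproj : IsStarProjection (diagonal fun i ↦ if i ∈ s then (1 : ℝ) else 0) :=
    ⟨by simp [IsIdempotentElem], by simp [IsSelfAdjoint, star_eq_conjTranspose]⟩
  simpa using mem_fantope_of_isStarProjection hproj

lemma trace_diagonal_mul_le_of_mem_fantope {d : ι → ℝ} {a r : ℝ} (hd : ∀ i, d i ≤ a)
    {P : Matrix ι ι ℝ} (hP : P ∈ fantope ι r) : (diagonal d * P).trace ≤ r * a := by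
  rw [← hP.2, mul_comm, trace, trace, mul_sum]
  refine sum_le_sum fun i _ ↦ ?_
  rw [diag_apply, diagonal_mul]
  exact mul_le_mul_of_nonneg_right (hd i) (apply_self_nonneg_of_mem_fantope hP i)

lemma trace_mul_eq_sum_eigenvalues_mul {M : Matrix ι ι ℝ} (hM : M.IsHermitian)
    (P : Matrix ι ι ℝ) :
    (M * P).trace =
      ∑ i, hM.eigenvalues i * conjStarAlgAut ℝ _ (star hM.eigenvectorUnitary) P i i := by
  rw [← trace_conjStarAlgAut (star hM.eigenvectorUnitary), map_mul,
    hM.conjStarAlgAut_star_eigenvectorUnitary]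
  simp [trace, diagonal_mul]

lemma trace_mul_self_eq_sum_sq_eigenvalues {M : Matrix ι ι ℝ} (hM : M.IsHermitian) :
    (M * M).trace = ∑ i, hM.eigenvalues i ^ 2 := by
  rw [trace_mul_eq_sum_eigenvalues_mul hM, hM.conjStarAlgAut_star_eigenvectorUnitary]
  simp [sq]

lemma exists_mem_fantope_trace_mul_eq_sum_eigenvalues {M : Matrix ι ι ℝ} (hM : M.IsHermitian)
    (s : Finset ι) : ∃ P ∈ fantope ι #s, (M * P).trace = ∑ i ∈ s, hM.eigenvalues i := by
  refine ⟨_, conjStarAlgAut_mem_fantope (diagonal_indicator_mem_fantope s) hM.eigenvectorUnitary,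
    ?_⟩
  rw [trace_mul_eq_sum_eigenvalues_mul hM, ← conjStarAlgAut_mul_apply]
  simp

lemma exists_trace_mul_le_sum_eigenvalues {M : Matrix ι ι ℝ} (hM : M.IsHermitian) {k : ℕ}
    (hk : k ≤ Fintype.card ι) :
    ∃ s : Finset ι, #s = k ∧ ∀ P ∈ fantope ι k, (M * P).trace ≤ ∑ i ∈ s, hM.eigenvalues i := by
  obtain ⟨s, hs, t, hmem, hnotMem⟩ := exists_card_eq_and_threshold hM.eigenvalues hk
  refine ⟨s, hs, fun P hP ↦ ?_⟩
  have hQ := conjStarAlgAut_mem_fantope hP (star hM.eigenvectorUnitary)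
  rw [trace_mul_eq_sum_eigenvalues_mul hM]
  exact sum_mul_le_sum_of_threshold hmem hnotMem (apply_self_nonneg_of_mem_fantope hQ)
    (apply_self_le_one_of_mem_fantope hQ) (hQ.2.trans (by rw [hs]))

end Fantope

section KyFan

variable {n k : ℕ} {M N : Matrix (Fin n) (Fin n) ℝ}

lemma isGreatest_Sk (hM : M.IsHermitian) (hk : k ≤ n) :
    IsGreatest {x | ∃ s : Finset (Fin n), #s = k ∧ x = ∑ i ∈ s, hM.eigenvalues i} (Sk M k) := by
  have hfin : {x | ∃ s : Finset (Fin n), #s = k ∧ x = ∑ i ∈ s, hM.eigenvalues i}.Finite :=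
    (Set.finite_range fun s : Finset (Fin n) ↦ ∑ i ∈ s, hM.eigenvalues i).subset
      fun x ⟨s, _, hx⟩ ↦ ⟨s, hx.symm⟩
  obtain ⟨s, -, hs⟩ := exists_subset_card_eq (s := (univ : Finset (Fin n))) (n := k) (by simpa)
  rw [Sk, dif_pos hM]
  exact ⟨Set.Nonempty.csSup_mem ⟨_, s, hs, rfl⟩ hfin, fun x hx ↦ le_csSup hfin.bddAbove hx⟩

theorem isGreatest_trace_mul_fantope (hM : M.IsHermitian) (hk : k ≤ n) :
    IsGreatest ((fun P ↦ (M * P).trace) '' fantope (Fin n) k) (Sk M k) := by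
  obtain ⟨⟨s, hs, hSk⟩, hub⟩ := isGreatest_Sk hM hk
  refine ⟨?_, ?_⟩
  · rw [hSk, ← hs]
    exact exists_mem_fantope_trace_mul_eq_sum_eigenvalues hM s
  · rintro _ ⟨P, hP, rfl⟩
    obtain ⟨s, hs, hle⟩ := exists_trace_mul_le_sum_eigenvalues hM (hk.trans_eq (by simp))
    exact (hle P hP).trans (hub ⟨s, hs, rfl⟩)

lemma trace_mul_le_Sk (hM : M.IsHermitian) (hk : k ≤ n) {P : Matrix (Fin n) (Fin n) ℝ}
    (hP : P ∈ fantope (Fin n) k) : (M * P).trace ≤ Sk M k :=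
  (isGreatest_trace_mul_fantope hM hk).2 ⟨P, hP, rfl⟩

lemma Sk_le_of_forall_trace_mul_le (hM : M.IsHermitian) (hk : k ≤ n) {a : ℝ}
    (h : ∀ P ∈ fantope (Fin n) k, (M * P).trace ≤ a) : Sk M k ≤ a :=
  (isLUB_le_iff (isGreatest_trace_mul_fantope hM hk).isLUB).2 (Set.forall_mem_image.2 h)

lemma Sk_add_le (hM : M.IsHermitian) (hN : N.IsHermitian) (hk : k ≤ n) :
    Sk (M + N) k ≤ Sk M k + Sk N k := by
  refine Sk_le_of_forall_trace_mul_le (hM.add hN) hk fun P hP ↦ ?_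
  rw [add_mul, trace_add]
  exact add_le_add (trace_mul_le_Sk hM hk hP) (trace_mul_le_Sk hN hk hP)

lemma Sk_smul_le (hM : M.IsHermitian) (hk : k ≤ n) {c : ℝ} (hc : 0 ≤ c) :
    Sk (c • M) k ≤ c * Sk M k := by
  refine Sk_le_of_forall_trace_mul_le (hM.smul (IsSelfAdjoint.all c)) hk fun P hP ↦ ?_
  rw [smul_mul_assoc, trace_smul, smul_eq_mul]
  exact mul_le_mul_of_nonneg_left (trace_mul_le_Sk hM hk hP) hc

lemma Sk_diagonal_le {d : Fin n → ℝ} {a : ℝ} (hd : ∀ i, d i ≤ a) (hk : k ≤ n) :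
    Sk (diagonal d) k ≤ k * a :=
  Sk_le_of_forall_trace_mul_le (isHermitian_diagonal d) hk
    fun _ hP ↦ trace_diagonal_mul_le_of_mem_fantope hd hP

lemma mul_sq_Sk_le_of_trace_eq_zero (hM : M.IsHermitian) (htr : M.trace = 0) (hk : k ≤ n) :
    n * Sk M k ^ 2 ≤ k * (n - k) * (M * M).trace := by
  obtain ⟨⟨s, rfl, hSk⟩, -⟩ := isGreatest_Sk hM hk
  have hsum : ∑ i, hM.eigenvalues i = 0 := by simpa [hM.trace_eq_sum_eigenvalues] using htr
  rw [hSk, trace_mul_self_eq_sum_sq_eigenvalues hM, ← Nat.cast_sub hk]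
  simpa [card_compl] using card_mul_sq_sum_le_of_sum_eq_zero hsum s

end KyFan

section AllOnes

variable {ι : Type*} [Fintype ι]

lemma of_one_mul_of_one : (of 1 * of 1 : Matrix ι ι ℝ) = (Fintype.card ι : ℝ) • of 1 := by
  ext
  simp [mul_apply]

lemma isStarProjection_inv_card_smul_of_one [Nonempty ι] :
    IsStarProjection ((Fintype.card ι : ℝ)⁻¹ • (of 1 : Matrix ι ι ℝ)) := by
  refine ⟨?_, by ext; simp⟩
  rw [IsIdempotentElem, smul_mul_smul_comm, of_one_mul_of_one, smul_smul]
  congr 1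
  field_simp

lemma exists_mem_fantope_trace_of_one_mul_eq_card [DecidableEq ι] {r : ℝ} (hr1 : 1 ≤ r)
    (hr : r ≤ Fintype.card ι) :
    ∃ P ∈ fantope ι r, (of 1 * P).trace = (Fintype.card ι : ℝ) := by
  set n : ℝ := (Fintype.card ι : ℝ) with hn
  have hn0 : n ≠ 0 := by linarith
  have : Nonempty ι := Fintype.card_pos_iff.1 (Nat.cast_pos.1 (hn ▸ by linarith : 0 < n))
  -- If `n = 1`, then `r = 1` and Lean's `0 / 0 = 0` gives a valid weight.
  set c : ℝ := (r - 1) / (n - 1)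
  have hc : c * (n - 1) = r - 1 := div_mul_cancel_of_imp fun h ↦ by linarith
  have hc0 : 0 ≤ c := div_nonneg (by linarith) (by linarith)
  have hc1 : c ≤ 1 := div_le_one_of_le₀ (by linarith) (by linarith)
  have hI : (1 : Matrix ι ι ℝ) ∈ fantope ι n := by
    simpa [hn] using mem_fantope_of_isStarProjection (IsStarProjection.one (Matrix ι ι ℝ))
  have hE : n⁻¹ • (of 1 : Matrix ι ι ℝ) ∈ fantope ι 1 := by
    simpa [trace, ← hn, hn0] using
      mem_fantope_of_isStarProjection (isStarProjection_inv_card_smul_of_one (ι := ι))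
  refine ⟨c • 1 + (1 - c) • n⁻¹ • of 1, ?_, ?_⟩
  · have hcr : c * n + (1 - c) * 1 = r := by linear_combination hc
    exact hcr ▸ convexComb_mem_fantope hI hE hc0 hc1
  · have hJ : (of 1 : Matrix ι ι ℝ).trace = n := by simp [trace, hn]
    simp only [mul_add, mul_smul_comm, mul_one, of_one_mul_of_one, ← hn, trace_add, trace_smul, hJ,
      smul_eq_mul]
    field_simp
    ring

end AllOnes

section AdjMatrix

variable {V : Type*} (G : SimpleGraph V) [DecidableRel G.Adj]

lemma isHermitian_adjMatrix : (G.adjMatrix ℝ).IsHermitian := by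
  rw [IsHermitian, conjTranspose_eq_transpose_of_trivial, G.transpose_adjMatrix]

variable [Fintype V]

lemma cast_degree_le_card_sub_one (v : V) : (G.degree v : ℝ) ≤ Fintype.card V - 1 := by
  rw [le_sub_iff_add_le]
  exact_mod_cast G.degree_lt_card_verts v

lemma cast_degree_compl [DecidableRel Gᶜ.Adj] (v : V) :
    (Gᶜ.degree v : ℝ) = Fintype.card V - 1 - G.degree v := by
  classical
  have hlt := G.degree_lt_card_verts v
  rw [G.degree_compl v, Nat.sub_sub, Nat.cast_sub (by omega)]
  push_cast
  ring

lemma trace_adjMatrix_mul_self_le :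
    (G.adjMatrix ℝ * G.adjMatrix ℝ).trace ≤ Fintype.card V * (Fintype.card V - 1 : ℝ) := by
  simp only [trace, diag_apply, G.adjMatrix_mul_self_apply_self]
  simpa using sum_le_card_nsmul univ (fun v ↦ (G.degree v : ℝ)) _
    fun v _ ↦ cast_degree_le_card_sub_one G v

end AdjMatrix

section Aalpha

variable {n k : ℕ} (α : ℝ) (G : SimpleGraph (Fin n)) [DecidableRel G.Adj]

lemma isHermitian_Aalpha : (Aalpha α G).IsHermitian :=
  ((isHermitian_diagonal _).smul (IsSelfAdjoint.all α)).add
    ((isHermitian_adjMatrix G).smul (IsSelfAdjoint.all (1 - α)))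

lemma Aalpha_add_Aalpha_compl [DecidableRel Gᶜ.Adj] :
    Aalpha α G + Aalpha α Gᶜ = (α * n - 1) • 1 + (1 - α) • of 1 := by
  ext i j
  obtain rfl | hij := eq_or_ne i j
  · have hdiag : α * G.degree i + α * (n - 1 - G.degree i) = α * n - 1 + (1 - α) := by ring
    simpa [Aalpha, cast_degree_compl] using hdiag
  · by_cases hadj : G.Adj i j <;> simp [Aalpha, hij, hadj]

lemma sq_Sk_adjMatrix_le (hn : 0 < n) (hk : k ≤ n) :
    Sk (G.adjMatrix ℝ) k ^ 2 ≤ k * (n - k) * (n - 1) := by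
  have hn' : (0 : ℝ) < n := by exact_mod_cast hn
  have hkn : (0 : ℝ) ≤ n - k := sub_nonneg.2 (by exact_mod_cast hk)
  refine le_of_mul_le_mul_left ?_ hn'
  calc n * Sk (G.adjMatrix ℝ) k ^ 2
      ≤ k * (n - k) * (G.adjMatrix ℝ * G.adjMatrix ℝ).trace :=
        mul_sq_Sk_le_of_trace_eq_zero (isHermitian_adjMatrix G) (G.trace_adjMatrix ℝ) hk
    _ ≤ k * (n - k) * (n * (n - 1)) := by
        gcongr
        simpa using trace_adjMatrix_mul_self_le G
    _ = n * (k * (n - k) * (n - 1)) := by ring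

lemma Sk_adjMatrix_le (hk1 : 1 ≤ k) (hk : k ≤ n) :
    Sk (G.adjMatrix ℝ) k ≤ k * (2 * n - k - 1) / 2 := by
  have hk1' : (1 : ℝ) ≤ k := by exact_mod_cast hk1
  have hk' : (k : ℝ) ≤ n := by exact_mod_cast hk
  have hfactor : (0 : ℝ) ≤ 2 * n - k - 1 := by linarith
  refine (abs_le_of_sq_le_sq' ?_ (by positivity)).2
  calc Sk (G.adjMatrix ℝ) k ^ 2
      ≤ k * (n - k) * (n - 1) := sq_Sk_adjMatrix_le G (by lia) hk
    _ = k * (((n - k) + (n - 1)) ^ 2 - (k - 1) ^ 2) / 4 := by ring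
    _ ≤ k * (2 * n - k - 1) ^ 2 / 4 := by
        gcongr
        linear_combination sq_nonneg (k - 1 : ℝ)
    _ ≤ k ^ 2 * (2 * n - k - 1) ^ 2 / 4 := by
        gcongr
        exact le_self_pow₀ hk1' two_ne_zero
    _ = (k * (2 * n - k - 1) / 2) ^ 2 := by ring

variable {α}

lemma Sk_Aalpha_le (hα0 : 0 ≤ α) (hα1 : α ≤ 1) (hk1 : 1 ≤ k) (hk : k ≤ n) {d : ℝ}
    (hd : ∀ i, (G.degree i : ℝ) ≤ d) :
    Sk (Aalpha α G) k ≤ k * (α * d + (1 - α) * ((2 * n - k - 1) / 2)) := by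
  have hD : (diagonal fun i ↦ (G.degree i : ℝ)).IsHermitian := isHermitian_diagonal _
  have hA := isHermitian_adjMatrix G
  have hα1' : 0 ≤ 1 - α := sub_nonneg.2 hα1
  calc Sk (Aalpha α G) k
      ≤ Sk (α • diagonal fun i ↦ (G.degree i : ℝ)) k + Sk ((1 - α) • G.adjMatrix ℝ) k :=
        Sk_add_le (hD.smul (IsSelfAdjoint.all _)) (hA.smul (IsSelfAdjoint.all _)) hk
    _ ≤ α * Sk (diagonal fun i ↦ (G.degree i : ℝ)) k + (1 - α) * Sk (G.adjMatrix ℝ) k :=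
        add_le_add (Sk_smul_le hD hk hα0) (Sk_smul_le hA hk hα1')
    _ ≤ α * (k * d) + (1 - α) * (k * (2 * n - k - 1) / 2) := by
        gcongr
        · exact Sk_diagonal_le hd hk
        · exact Sk_adjMatrix_le G hk1 hk
    _ = k * (α * d + (1 - α) * ((2 * n - k - 1) / 2)) := by ring

variable (α)

theorem le_Sk_Aalpha_add_Sk_Aalpha_compl [DecidableRel Gᶜ.Adj] (hk1 : 1 ≤ k) (hk : k ≤ n) :
    (1 - α) * n + (α * n - 1) * k ≤ Sk (Aalpha α G) k + Sk (Aalpha α Gᶜ) k := by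
  obtain ⟨P, hP, hJP⟩ := exists_mem_fantope_trace_of_one_mul_eq_card (ι := Fin n) (r := k)
    (by exact_mod_cast hk1) (by simpa)
  have hA := isHermitian_Aalpha α G
  have hA' := isHermitian_Aalpha α Gᶜ
  calc (1 - α) * n + (α * n - 1) * k
      = ((Aalpha α G + Aalpha α Gᶜ) * P).trace := by
        rw [Aalpha_add_Aalpha_compl, add_mul, smul_mul_assoc, smul_mul_assoc, one_mul, trace_add,
          trace_smul, trace_smul, hP.2, hJP, Fintype.card_fin, smul_eq_mul, smul_eq_mul, add_comm]
    _ ≤ Sk (Aalpha α G + Aalpha α Gᶜ) k := trace_mul_le_Sk (hA.add hA') hk hP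
    _ ≤ Sk (Aalpha α G) k + Sk (Aalpha α Gᶜ) k := Sk_add_le hA hA' hk

variable {α}

theorem Sk_Aalpha_add_Sk_Aalpha_compl_le [DecidableRel Gᶜ.Adj] (hα0 : 0 ≤ α) (hα1 : α ≤ 1)
    (hk1 : 1 ≤ k) (hk : k ≤ n) :
    Sk (Aalpha α G) k + Sk (Aalpha α Gᶜ) k ≤
      k * ((2 - α) * n + α * (G.maxDegree - G.minDegree - 1) - (1 - α) * (k + 1)) := by
  have hG (i : Fin n) : (G.degree i : ℝ) ≤ G.maxDegree := by
    exact_mod_cast G.degree_le_maxDegree i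
  have hGc (i : Fin n) : (Gᶜ.degree i : ℝ) ≤ n - 1 - G.minDegree := by
    rw [cast_degree_compl, Fintype.card_fin]
    gcongr
    exact G.minDegree_le_degree i
  linear_combination Sk_Aalpha_le G hα0 hα1 hk1 hk hG + Sk_Aalpha_le Gᶜ hα0 hα1 hk1 hk hGc

end Aalpha

theorem stmt19 {n : ℕ} (G : SimpleGraph (Fin n)) [DecidableRel G.Adj] [DecidableRel Gᶜ.Adj]
    (α : ℝ) (hα0 : 0 ≤ α) (hα1 : α ≤ 1)
    (k : ℕ) (hk1 : 1 ≤ k) (hkn : k ≤ n) :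
    (1 - α) * n + (α * n - 1) * k ≤ Sk (Aalpha α G) k + Sk (Aalpha α Gᶜ) k ∧
      Sk (Aalpha α G) k + Sk (Aalpha α Gᶜ) k ≤
        (k : ℝ) * ((2 - α) * n + α * ((G.maxDegree : ℝ) - G.minDegree - 1)
          - (1 - α) * ((k : ℝ) + 1)) :=
  ⟨le_Sk_Aalpha_add_Sk_Aalpha_compl α G hk1 hkn,
    Sk_Aalpha_add_Sk_Aalpha_compl_le G hα0 hα1 hk1 hkn⟩
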